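/- Let F be a finite family of pairwise distinct, pairwise noncrossing nonempty compact convex subsets of ℝ² in general position (no two tangent, no line tangent to three members). If F is in convex position, then there exists an enumeration A₁, …, A_N of F such that for all indices i < j < k the ordered triple (A_i, A_j, A_k) is counterclockwise oriented. -/

import Mathlib

open Set

noncomputable section

/-- The Euclidean plane. -/
abbrev Plane : Type := EuclideanSpace ℝ (Fin 2)

/-- The 2×2 determinant of two plane vectors. -/
def det2 (u v : Plane) : ℝ := u 0 * v 1 - u 1 * v 0

/-- A convex body in the plane: nonempty, compact and convex. -/
def ConvexBody2 (A : Set Plane) : Prop := A.Nonempty ∧ IsCompact A ∧ Convex ℝ A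

/-- A family of sets is in convex position if removing any member changes the
convex hull of the union of the family. -/
def ConvexPos (F : Set (Set Plane)) : Prop :=
  ∀ A ∈ F, convexHull ℝ (⋃₀ F) ≠ convexHull ℝ (⋃₀ (F \ {A}))

/-- A family is in general position if every 3-element subfamily is in convex position. -/
def GenPos (F : Set (Set Plane)) : Prop :=
  ∀ G ⊆ F, G.ncard = 3 → ConvexPos G

/-- Two sets are noncrossing if both set differences are connected. -/
def NoncrossingPair (A B : Set Plane) : Prop := IsConnected (A \ B) ∧ IsConnected (B \ A)

/-- Two convex bodies are tangent if they intersect but their interiors are disjoint. -/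
def TangentBodies (A B : Set Plane) : Prop :=
  (A ∩ B).Nonempty ∧ interior A ∩ interior B = ∅

/-- The line `{x | f x = c}` (for `f ≠ 0`) is tangent to `A`:
it meets `A` and `A` lies in one of the two closed half-planes it bounds. -/
def TangentLineTo (f : Plane →ₗ[ℝ] ℝ) (c : ℝ) (A : Set Plane) : Prop :=
  (∃ x ∈ A, f x = c) ∧ ((∀ x ∈ A, f x ≤ c) ∨ (∀ x ∈ A, c ≤ f x))

/-- No line is tangent to three distinct members of the family. -/
def NoTripleTangentLine (F : Set (Set Plane)) : Prop :=
  ∀ f : Plane →ₗ[ℝ] ℝ, f ≠ 0 → ∀ c : ℝ, ∀ A ∈ F, ∀ B ∈ F, ∀ C ∈ F,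
    A ≠ B → B ≠ C → A ≠ C →
    ¬ (TangentLineTo f c A ∧ TangentLineTo f c B ∧ TangentLineTo f c C)

/-- The ordered triple `(A₁, A₂, A₃)` is counterclockwise oriented. -/
def CCWOriented (A₁ A₂ A₃ : Set Plane) : Prop :=
  ∃ a₁ ∈ A₁ ∩ frontier (convexHull ℝ (A₁ ∪ A₂ ∪ A₃)),
  ∃ a₂ ∈ A₂ ∩ frontier (convexHull ℝ (A₁ ∪ A₂ ∪ A₃)),
  ∃ a₃ ∈ A₃ ∩ frontier (convexHull ℝ (A₁ ∪ A₂ ∪ A₃)),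
    0 < det2 (a₂ - a₁) (a₃ - a₁)

/-- The ordered triple `(A₁, A₂, A₃)` is clockwise oriented. -/
def CWOriented (A₁ A₂ A₃ : Set Plane) : Prop :=
  ∃ a₁ ∈ A₁ ∩ frontier (convexHull ℝ (A₁ ∪ A₂ ∪ A₃)),
  ∃ a₂ ∈ A₂ ∩ frontier (convexHull ℝ (A₁ ∪ A₂ ∪ A₃)),
  ∃ a₃ ∈ A₃ ∩ frontier (convexHull ℝ (A₁ ∪ A₂ ∪ A₃)),
    det2 (a₂ - a₁) (a₃ - a₁) < 0

/-- An affine line in the plane: an affine subspace with 1-dimensional direction. -/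
def IsLine (L : AffineSubspace ℝ Plane) : Prop := Module.finrank ℝ L.direction = 1

/-- `L` is a transversal line of the family `F`. -/
def TransversalLine (L : AffineSubspace ℝ Plane) (F : Set (Set Plane)) : Prop :=
  IsLine L ∧ ∀ A ∈ F, ((L : Set Plane) ∩ A).Nonempty

/-! Removing `A` shrinks the compact hull `K` of the union of `F`, so by Krein–Milman some extreme
point of `K` lies outside the hull of the other members, hence in `A`. Choosing such a point for
every member gives a convexly independent family, which a ray rotating counterclockwise about one
of its points sweeps in a linear order whose increasing triples are all counterclockwise. Being
extreme in `K`, the chosen points lie on the frontier of the hull of any three members. -/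

lemma convexIndependent_of_notMem_convexHull_sUnion {𝕜 E : Type*} [Semiring 𝕜] [PartialOrder 𝕜]
    [AddCommGroup E] [Module 𝕜 E] {F : Set (Set E)} {p : F → E}
    (hmem : ∀ A, p A ∈ A.1) (hnotMem : ∀ A, p A ∉ convexHull 𝕜 (⋃₀ (F \ {A.1}))) :
    ConvexIndependent 𝕜 p := by
  intro s A hA
  by_contra hAs
  refine hnotMem A (convexHull_mono ?_ hA)
  rintro _ ⟨B, hB, rfl⟩
  have hBA : B.1 ≠ A.1 := fun h => hAs (Subtype.ext h ▸ hB)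
  exact ⟨B.1, ⟨B.2, hBA⟩, hmem B⟩

section ConvexIndependent

variable {𝕜 E ι : Type*} [Field 𝕜] [LinearOrder 𝕜] [IsStrictOrderedRing 𝕜] [AddCommGroup E]
  [Module 𝕜 E] {p : ι → E}

lemma not_wbtw_of_convexIndependent (hp : ConvexIndependent 𝕜 p)
    {i j k : ι} (hij : i ≠ j) (hjk : j ≠ k) : ¬ Wbtw 𝕜 (p i) (p j) (p k) := by
  rw [← mem_segment_iff_wbtw, ← convexHull_pair, ← image_pair, hp.mem_convexHull_iff]
  simp [hij.symm, hjk]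

lemma not_collinear_of_convexIndependent (hp : ConvexIndependent 𝕜 p)
    {i j k : ι} (hij : i ≠ j) (hjk : j ≠ k) (hik : i ≠ k) :
    ¬ Collinear 𝕜 {p i, p j, p k} := by
  intro h
  rcases h.wbtw_or_wbtw_or_wbtw with h | h | h
  · exact not_wbtw_of_convexIndependent hp hij hjk h
  · exact not_wbtw_of_convexIndependent hp hjk hik.symm h
  · exact not_wbtw_of_convexIndependent hp hik.symm hij h

end ConvexIndependent

section ConvexHull

variable {E : Type*} [AddCommGroup E] [Module ℝ E] [TopologicalSpace E] [IsTopologicalAddGroup E]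
  [ContinuousSMul ℝ E]

/- By Carathéodory, the hull is a finite union of continuous images of the compact sets
`stdSimplex ℝ (Fin n) × sⁿ`, `n ≤ dim E + 1`. -/
lemma isCompact_convexHull_of_isCompact [FiniteDimensional ℝ E] {s : Set E} (hs : IsCompact s) :
    IsCompact (convexHull ℝ s) := by
  have hunion : convexHull ℝ s = ⋃ n ∈ Finset.range (Module.finrank ℝ E + 2),
      (fun wz : (Fin n → ℝ) × (Fin n → E) => ∑ i, wz.1 i • wz.2 i) ''
        (stdSimplex ℝ (Fin n) ×ˢ univ.pi fun _ => s) := by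
    refine Subset.antisymm (fun x hx => ?_) (iUnion₂_subset fun n _ => ?_)
    · obtain ⟨ι, _, z, w, hzs, hz, hw_pos, hw_sum, rfl⟩ := eq_pos_convex_span_of_mem_convexHull hx
      have hcard : Fintype.card ι ≤ Module.finrank ℝ E + 1 :=
        hz.card_le_finrank_succ.trans (by gcongr; exact Submodule.finrank_le _)
      let e := (Fintype.equivFin ι).symm
      refine mem_iUnion₂.2 ⟨Fintype.card ι, Finset.mem_range.2 (by lia), (w ∘ e, z ∘ e),
        ⟨⟨fun i => (hw_pos _).le, ?_⟩, fun i _ => hzs ⟨e i, rfl⟩⟩,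
        e.sum_comp fun i => w i • z i⟩
      exact (e.sum_comp w).trans hw_sum
    · rintro _ ⟨⟨w, z⟩, ⟨⟨hw_nonneg, hw_sum⟩, hzs⟩, rfl⟩
      exact (convex_convexHull ℝ s).sum_mem (fun i _ => hw_nonneg i) hw_sum
        fun i _ => subset_convexHull ℝ s (hzs i trivial)
  rw [hunion]
  exact (Finset.range _).isCompact_biUnion fun n _ =>
    ((isCompact_stdSimplex ℝ (Fin n)).prod (isCompact_univ_pi fun _ => hs)).image (by fun_prop)

lemma mem_frontier_of_mem_extremePoints [Nontrivial E] {K L : Set E} (hLK : L ⊆ K) {x : E}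
    (hx : x ∈ K.extremePoints ℝ) (hxL : x ∈ L) : x ∈ frontier L :=
  ⟨subset_closure hxL, fun hxint => (disjoint_interior_extremePoints L).notMem_of_mem_left hxint
    (inter_extremePoints_subset_extremePoints_of_subset hLK ⟨hxL, hx⟩)⟩

lemma exists_mem_extremePoints_notMem [T2Space E] [LocallyConvexSpace ℝ E] {K C : Set E}
    (hKcomp : IsCompact K) (hKconv : Convex ℝ K) (hCclosed : IsClosed C) (hCconv : Convex ℝ C)
    (hKC : ¬ K ⊆ C) : ∃ x ∈ K.extremePoints ℝ, x ∉ C := by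
  rw [← not_subset]
  intro hext
  apply hKC
  rw [← closure_convexHull_extremePoints hKcomp hKconv]
  exact closure_minimal (convexHull_min hext hCconv) hCclosed

end ConvexHull

lemma exists_smul_eq_of_det2_eq_zero {u v : Plane} (hu : u ≠ 0) (h : det2 u v = 0) :
    ∃ t : ℝ, v = t • u := by
  obtain ⟨i, hi⟩ : ∃ i, u i ≠ 0 := by
    by_contra! hzero
    exact hu (PiLp.ext hzero)
  refine ⟨v i / u i, PiLp.ext fun j => ?_⟩
  have hcross : v j * u i = v i * u j := by
    unfold det2 at h
    fin_cases i <;> fin_cases j <;> dsimp <;> linarith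
  rw [PiLp.smul_apply, smul_eq_mul, div_mul_eq_mul_div, eq_div_iff hi, hcross]

/-- Twice the signed area of the triangle `a b c`; positive when the vertices are listed
counterclockwise. -/
def orient (a b c : Plane) : ℝ := det2 (b - a) (c - a)

lemma orient_rotate (a b c : Plane) : orient b c a = orient a b c := by
  simp only [orient, det2, PiLp.sub_apply]
  ring

lemma orient_swap (a b c : Plane) : orient a c b = -orient a b c := by
  simp only [orient, det2]
  ring

lemma orient_self_left (a b : Plane) : orient a a b = 0 := by
  simp [orient, det2]

lemma ne_of_orient_pos {a b c : Plane} (h : 0 < orient a b c) : a ≠ b := by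
  rintro rfl
  exact h.ne' (orient_self_left a c)

lemma orient_smul_add_orient_smul_add_orient_smul (o a b c : Plane) :
    orient o b c • a + orient o c a • b + orient o a b • c =
      (orient o b c + orient o c a + orient o a b) • o := by
  ext i
  fin_cases i <;> simp [orient, det2] <;> ring

lemma mem_convexHull_of_orient {o a b c : Plane} (hbc : 0 ≤ orient o b c)
    (hca : 0 ≤ orient o c a) (hab : 0 < orient o a b) : o ∈ convexHull ℝ {a, b, c} := by
  let w : Fin 3 → ℝ := ![orient o b c, orient o c a, orient o a b]
  let z : Fin 3 → Plane := ![a, b, c]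
  have hw_sum : ∑ i, w i = orient o b c + orient o c a + orient o a b := by
    simp [w, Fin.sum_univ_three]
  have hw_pos : 0 < ∑ i, w i := by linarith
  have hcenter : Finset.univ.centerMass w z = o := by
    rw [Finset.centerMass, inv_smul_eq_iff₀ hw_pos.ne', hw_sum,
      ← orient_smul_add_orient_smul_add_orient_smul]
    simp [w, z, Fin.sum_univ_three]
  rw [← hcenter]
  refine Finset.centerMass_mem_convexHull _ (fun i _ => ?_) hw_pos fun i _ => ?_
  · fin_cases i
    exacts [hbc, hca, hab.le]
  · fin_cases i <;> simp [z]

lemma orient_pos_trans {o a b c : Plane} (ho : o ∉ convexHull ℝ {a, b, c})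
    (hab : 0 < orient o a b) (hbc : 0 < orient o b c) : 0 < orient o a c := by
  by_contra! hac
  exact ho (mem_convexHull_of_orient hbc.le (by linarith [orient_swap o a c]) hab)

lemma collinear_of_orient_eq_zero {a b c : Plane} (h : orient a b c = 0) :
    Collinear ℝ {a, b, c} := by
  rcases eq_or_ne b a with rfl | hba
  · simpa using collinear_pair ℝ b c
  obtain ⟨t, ht⟩ := exists_smul_eq_of_det2_eq_zero (sub_ne_zero.2 hba) h
  rw [collinear_iff_of_mem (mem_insert a _)]
  refine ⟨b - a, ?_⟩
  rintro x (rfl | rfl | rfl)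
  · exact ⟨0, by simp⟩
  · exact ⟨1, by simp⟩
  · exact ⟨t, by simp [← ht]⟩

/-- The order in which a ray rotating counterclockwise about `o` meets the other points, with `o`
itself placed first. It is a linear order on a convexly independent set containing `o`; on
arbitrary point sets it need not be transitive. -/
def SweepLT (o x y : Plane) : Prop := (x = o ∧ y ≠ o) ∨ 0 < orient o x y

lemma SweepLT.right_ne {o x y : Plane} (h : SweepLT o x y) : y ≠ o := by
  rcases h with h | h
  · exact h.2
  · rw [← orient_rotate, ← orient_rotate] at h
    exact ne_of_orient_pos h

lemma SweepLT.orient_pos {o x y : Plane} (h : SweepLT o x y) (hx : x ≠ o) : 0 < orient o x y :=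
  h.resolve_left fun hxo => hx hxo.1

lemma not_sweepLT_self (o x : Plane) : ¬ SweepLT o x x := by
  intro h
  have hpos := h.orient_pos h.right_ne
  rw [← orient_rotate] at hpos
  exact ne_of_orient_pos hpos rfl

section SweepOrder

variable {ι : Type*} {p : ι → Plane}

lemma orient_ne_zero_of_convexIndependent (hp : ConvexIndependent ℝ p) {i j k : ι}
    (hij : i ≠ j) (hjk : j ≠ k) (hik : i ≠ k) : orient (p i) (p j) (p k) ≠ 0 :=
  fun h => not_collinear_of_convexIndependent hp hij hjk hik (collinear_of_orient_eq_zero h)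

lemma orient_pos_trans_of_convexIndependent (hp : ConvexIndependent ℝ p) {o i j k : ι}
    (hij : 0 < orient (p o) (p i) (p j)) (hjk : 0 < orient (p o) (p j) (p k)) :
    0 < orient (p o) (p i) (p k) := by
  have hio : o ≠ i := fun h => ne_of_orient_pos hij (congrArg p h)
  have hjo : o ≠ j := fun h => ne_of_orient_pos hjk (congrArg p h)
  have hko : o ≠ k := by
    rintro rfl
    rw [← orient_rotate, ← orient_rotate] at hjk
    exact ne_of_orient_pos hjk rfl
  refine orient_pos_trans (b := p j) ?_ hij hjk
  have himage : ({p i, p j, p k} : Set Plane) = p '' {i, j, k} := by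
    simp only [image_insert_eq, image_singleton]
  rw [himage, hp.mem_convexHull_iff]
  simp [hio, hjo, hko]

lemma SweepLT.trans_of_convexIndependent (hp : ConvexIndependent ℝ p) {o i j k : ι}
    (hij : SweepLT (p o) (p i) (p j)) (hjk : SweepLT (p o) (p j) (p k)) :
    SweepLT (p o) (p i) (p k) := by
  by_cases hio : p i = p o
  · exact Or.inl ⟨hio, hjk.right_ne⟩
  · exact Or.inr (orient_pos_trans_of_convexIndependent hp (hij.orient_pos hio)
      (hjk.orient_pos hij.right_ne))

lemma sweepLT_trichotomous_of_convexIndependent (hp : ConvexIndependent ℝ p) (o i j : ι) :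
    SweepLT (p o) (p i) (p j) ∨ i = j ∨ SweepLT (p o) (p j) (p i) := by
  rcases eq_or_ne i j with hij | hij
  · exact Or.inr (Or.inl hij)
  rcases eq_or_ne i o with rfl | hio
  · exact Or.inl (Or.inl ⟨rfl, hp.injective.ne hij.symm⟩)
  rcases eq_or_ne j o with rfl | hjo
  · exact Or.inr (Or.inr (Or.inl ⟨rfl, hp.injective.ne hij⟩))
  rcases (orient_ne_zero_of_convexIndependent hp hio.symm hij hjo.symm).lt_or_gt with h | h
  · exact Or.inr (Or.inr (Or.inr (by linarith [orient_swap (p o) (p i) (p j)])))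
  · exact Or.inl (Or.inr h)

lemma isStrictTotalOrder_sweepLT (hp : ConvexIndependent ℝ p) (o : ι) :
    IsStrictTotalOrder ι fun i j => SweepLT (p o) (p i) (p j) where
  irrefl i := not_sweepLT_self (p o) (p i)
  trans _ _ _ := SweepLT.trans_of_convexIndependent hp
  trichotomous i j hij hji :=
    ((sweepLT_trichotomous_of_convexIndependent hp o i j).resolve_left hij).resolve_right hji

lemma orient_pos_of_sweepLT (hp : ConvexIndependent ℝ p) {o i j k : ι}
    (hij : SweepLT (p o) (p i) (p j)) (hjk : SweepLT (p o) (p j) (p k)) :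
    0 < orient (p i) (p j) (p k) := by
  have hojk : 0 < orient (p o) (p j) (p k) := hjk.orient_pos hij.right_ne
  by_cases hio : p i = p o
  · rwa [hio]
  have hoij : 0 < orient (p o) (p i) (p j) := hij.orient_pos hio
  -- Seen from `p j`, the counterclockwise order is `p k`, `p o`, `p i`.
  rw [← orient_rotate] at hojk ⊢
  rw [← orient_rotate, ← orient_rotate] at hoij
  exact orient_pos_trans_of_convexIndependent hp hojk hoij

lemma exists_equiv_fin_rel_of_lt {α : Type*} [Finite α] (r : α → α → Prop)
    [IsStrictTotalOrder α r] : ∃ e : Fin (Nat.card α) ≃ α, ∀ i j, i < j → r (e i) (e j) := by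
  classical
  let := linearOrderOfSTO r
  let := Fintype.ofFinite α
  let e := Fintype.orderIsoFinOfCardEq α Nat.card_eq_fintype_card.symm
  exact ⟨e.toEquiv, fun _ _ hij => e.strictMono hij⟩

lemma exists_equiv_fin_orient_pos [Finite ι] (hp : ConvexIndependent ℝ p) :
    ∃ e : Fin (Nat.card ι) ≃ ι, ∀ i j k, i < j → j < k →
      0 < orient (p (e i)) (p (e j)) (p (e k)) := by
  rcases isEmpty_or_nonempty ι with _ | ⟨⟨o⟩⟩
  · exact ⟨(Finite.equivFin ι).symm, fun i => isEmptyElim ((Finite.equivFin ι).symm i)⟩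
  have := isStrictTotalOrder_sweepLT hp o
  obtain ⟨e, he⟩ := exists_equiv_fin_rel_of_lt fun i j => SweepLT (p o) (p i) (p j)
  exact ⟨e, fun i j k hij hjk => orient_pos_of_sweepLT hp (he i j hij) (he j k hjk)⟩

end SweepOrder

lemma CCWOriented.of_extremePoints {A B C K : Set Plane} (hK : Convex ℝ K) (hABC : A ∪ B ∪ C ⊆ K)
    {a b c : Plane} (ha : a ∈ A ∩ K.extremePoints ℝ) (hb : b ∈ B ∩ K.extremePoints ℝ)
    (hc : c ∈ C ∩ K.extremePoints ℝ) (habc : 0 < orient a b c) : CCWOriented A B C := by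
  have hfrontier {x : Plane} (hx : x ∈ A ∪ B ∪ C) (hxK : x ∈ K.extremePoints ℝ) :
      x ∈ frontier (convexHull ℝ (A ∪ B ∪ C)) :=
    mem_frontier_of_mem_extremePoints (convexHull_min hABC hK) hxK (subset_convexHull ℝ _ hx)
  exact ⟨a, ⟨ha.1, hfrontier (Or.inl (Or.inl ha.1)) ha.2⟩,
    b, ⟨hb.1, hfrontier (Or.inl (Or.inr hb.1)) hb.2⟩,
    c, ⟨hc.1, hfrontier (Or.inr hc.1) hc.2⟩, habc⟩

lemma ConvexPos.exists_extremePoint {F : Set (Set Plane)} (hfin : F.Finite)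
    (hcomp : ∀ A ∈ F, IsCompact A) (hconv : ConvexPos F) {A : Set Plane} (hA : A ∈ F) :
    ∃ x ∈ A ∩ (convexHull ℝ (⋃₀ F)).extremePoints ℝ, x ∉ convexHull ℝ (⋃₀ (F \ {A})) := by
  have hhull : IsCompact (convexHull ℝ (⋃₀ F)) :=
    isCompact_convexHull_of_isCompact (hfin.isCompact_sUnion hcomp)
  have hhull_diff : IsClosed (convexHull ℝ (⋃₀ (F \ {A}))) :=
    (isCompact_convexHull_of_isCompact
      (hfin.sdiff.isCompact_sUnion fun B hB => hcomp B hB.1)).isClosed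
  have hnot : ¬ convexHull ℝ (⋃₀ F) ⊆ convexHull ℝ (⋃₀ (F \ {A})) := fun h =>
    hconv A hA (h.antisymm (convexHull_mono (sUnion_subset_sUnion sdiff_subset)))
  obtain ⟨x, hx, hxA⟩ := exists_mem_extremePoints_notMem hhull (convex_convexHull ℝ _)
    hhull_diff (convex_convexHull ℝ _) hnot
  obtain ⟨B, hB, hxB⟩ := extremePoints_convexHull_subset hx
  obtain rfl : B = A := by
    by_contra hBA
    exact hxA (subset_convexHull ℝ _ ⟨B, ⟨hB, hBA⟩, hxB⟩)
  exact ⟨x, ⟨hxB, hx⟩, hxA⟩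

theorem exists_ccw_enumeration_of_convexPos_general (F : Set (Set Plane)) (hfin : F.Finite)
    (hcomp : ∀ A ∈ F, IsCompact A) (hconv : ConvexPos F) :
    ∃ A : Fin F.ncard → Set Plane, Function.Injective A ∧ Set.range A = F ∧
      ∀ i j k : Fin F.ncard, i < j → j < k → CCWOriented (A i) (A j) (A k) := by
  choose p hp hp_notMem using fun A : F => hconv.exists_extremePoint hfin hcomp A.2
  have hindep : ConvexIndependent ℝ p :=
    convexIndependent_of_notMem_convexHull_sUnion (fun A => (hp A).1) hp_notMem
  have := hfin.to_subtype
  obtain ⟨e, he⟩ := exists_equiv_fin_orient_pos hindep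
  refine ⟨fun i => e i, Subtype.val_injective.comp e.injective, ?_, fun i j k hij hjk => ?_⟩
  · exact (e.surjective.range_comp Subtype.val).trans Subtype.range_coe
  have hsub (A : F) : A.1 ⊆ convexHull ℝ (⋃₀ F) :=
    (subset_sUnion_of_mem A.2).trans (subset_convexHull ℝ _)
  exact CCWOriented.of_extremePoints (convex_convexHull ℝ _)
    (union_subset (union_subset (hsub (e i)) (hsub (e j))) (hsub (e k)))
    (hp (e i)) (hp (e j)) (hp (e k)) (he i j k hij hjk)

/-- A family in convex position admits an enumeration in which every ordered
triple is counterclockwise oriented. -/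
theorem exists_ccw_enumeration_of_convexPos (F : Set (Set Plane)) (hfin : F.Finite)
    (hbody : ∀ A ∈ F, ConvexBody2 A)
    (hnc : F.Pairwise NoncrossingPair)
    (hgen : GenPos F)
    (htan : F.Pairwise fun A B => ¬ TangentBodies A B)
    (hline : NoTripleTangentLine F)
    (hconv : ConvexPos F) :
    ∃ A : Fin F.ncard → Set Plane, Function.Injective A ∧ Set.range A = F ∧
      ∀ i j k : Fin F.ncard, i < j → j < k → CCWOriented (A i) (A j) (A k) :=
  exists_ccw_enumeration_of_convexPos_general F hfin (fun A hA => (hbody A hA).2.1) hconv
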